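/- Let R = k[x_1,…,x_d] with d ≥ 3 and let E be a torsion-free R-module of rank e and projective dimension one with μ(E) = d+e, minimal free resolution 0 → R^d →φ R^{d+e} → E → 0 where φ = [φ′ | φ″] with φ′ having d−2 columns of linear forms and φ″ two columns of quadrics, I_1(φ) = (x_1,…,x_d), and E satisfying G_d. Write S(E) ≅ B/(ℓ_1,…,ℓ_d) with B = R ⊗_k T bigraded as usual. Then, in the duality theorem applied to the regular sequence ℓ_1,…,ℓ_d, one has δ = 2 and τ = d; moreover S(E)_0 is a free T-module of rank one, rank_T S(E)_1 = 2, and rank_T S(E)_2 = 1. -/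

import Mathlib

/-!
STATEMENT 7: `R = k[x_1,…,x_d]`, `d ≥ 3`, `E` torsion-free of rank `e`, `pd E = 1`,
`μ(E) = d+e`, presented by `φ = [φ′ | φ″]` with `d−2` linear columns and two columns of
quadrics, `I_1(φ) = (x_1,…,x_d)`, `E` satisfying `G_d`.  For `S(E) ≅ B/(ℓ_1,…,ℓ_d)`, in
the duality theorem applied to `ℓ_1,…,ℓ_d` one has `δ = 2` and `τ = d`; moreover
`S(E)_0` is a free `T`-module of rank one, `rank_T S(E)_1 = 2` and `rank_T S(E)_2 = 1`.
-/

open MvPolynomial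

noncomputable section

namespace Stmt7

variable (k : Type) [Field k] (d n : ℕ)

/-- `B = R ⊗_k T = k[x_1,…,x_d,y_1,…,y_n]`. -/
abbrev B := MvPolynomial (Fin d ⊕ Fin n) k

/-- `T = k[y_1,…,y_n]`. -/
abbrev T := MvPolynomial (Fin n) k

/-- `B` is a `T`-algebra via `y_j ↦ y_j`. -/
instance : Algebra (T k n) (B k d n) :=
  ((rename Sum.inr : T k n →ₐ[k] B k d n).toRingHom).toAlgebra

/-- The bigrading weight: `bideg x_i = (1,0)`, `bideg y_j = (0,1)`. -/
def bwt : (Fin d ⊕ Fin n) → ℕ × ℕ := Sum.elim (fun _ => (1, 0)) (fun _ => (0, 1))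

/-- The `x`-degree weight. -/
def wx : (Fin d ⊕ Fin n) → ℕ := Sum.elim (fun _ => 1) (fun _ => 0)

/-- The ideal `m = (x_1,…,x_d)B`. -/
def mxB : Ideal (B k d n) := Ideal.span (Set.range fun i : Fin d => (X (Sum.inl i) : B k d n))

variable (I : Ideal (B k d n))

/-- `A = H⁰_m(S)`: elements of `S = B/I` annihilated by a power of `m`. -/
def H0 : Submodule (B k d n) (B k d n ⧸ I) :=
  ⨆ N : ℕ, Submodule.torsionBySet (B k d n) (B k d n ⧸ I)
    ((mxB k d n ^ N : Ideal (B k d n)) : Set (B k d n))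

/-- The bigraded component of `S = B/I` in bidegree `p`. -/
def Scomp (p : ℕ × ℕ) : Submodule k (B k d n ⧸ I) :=
  (weightedHomogeneousSubmodule k (bwt d n) p).map (Ideal.Quotient.mkₐ k I).toLinearMap

/-- The graded strand `S_j = ⊕_b S_{(j,b)}` of `S` in `x`-degree `j`, as a `T`-module. -/
def SxDeg (j : ℕ) : Submodule (T k n) (B k d n ⧸ I) :=
  Submodule.span (T k n) ((Ideal.Quotient.mk I) '' {g : B k d n | g.IsWeightedHomogeneous (wx d n) j})

/-- The graded strand of `S` in (possibly negative) `x`-degree `i : ℤ`. -/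
def SxDegZ (i : ℤ) : Submodule (T k n) (B k d n ⧸ I) :=
  if 0 ≤ i then SxDeg k d n I i.toNat else ⊥

/-- The graded strand `A_i = ⊕_b A_{(i,b)}` of `A = H⁰_m(S)`, as a `T`-module. -/
def AcompZ (i : ℤ) : Submodule (T k n) (B k d n ⧸ I) :=
  (H0 k d n I).restrictScalars (T k n) ⊓ SxDegZ k d n I i

/-- The graded component of `T` in (possibly negative) degree `j`. -/
def TcompZ (j : ℤ) : Submodule k (T k n) :=
  if 0 ≤ j then homogeneousSubmodule (Fin n) k j.toNat else ⊥

/-- The ideal of `t × t` minors of a matrix. -/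
def minorsIdeal {R : Type} [CommRing R] {m' n' : Type} (M : Matrix m' n' R) (t : ℕ) :
    Ideal R :=
  Ideal.span {x | ∃ (f : Fin t → m') (g : Fin t → n'), x = (M.submatrix f g).det}

/-- `ht I ≥ c`: every prime containing `I` has height (= dimension of the localization)
at least `c`. -/
def htGE {R : Type} [CommRing R] (I : Ideal R) (c : ℕ) : Prop :=
  ∀ (p : Ideal R) (_ : p.IsPrime), I ≤ p →
    (c : WithBot ℕ∞) ≤ ringKrullDim (Localization.AtPrime p)

/-!
Fibre by fibre over `R`, the forms `ℓ_i` are linear forms in the `y_j` with coefficients the columns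
of `φ`. Hence a prime of `B` containing them all and lying over `p` has height at least
`ht p + rank φ(p)`, where `φ(p)` is `φ` over the residue field of `p`, and `G_d` makes this at least
`d`. Now invert `T ∖ {0}`: over `K = Frac T` the `ℓ_i` become `d - 2` linear forms and two quadrics
in `x_1, …, x_d`, and all primes containing them still have height at least `d`. By Krull's height
theorem no `ℓ_i` lies in a prime minimal over the others, so no syzygy has an invertible
coefficient. Eliminating the linear forms therefore leaves `K[u, v]` modulo two linearly independent
quadrics, with components of dimension `2` and `3 - 2 = 1` in degrees `1` and `2`. In degree `0` the
strand is `T`, because the `ℓ_i` vanish at `x = 0`.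
-/

section LinearSubstitutions

variable {R σ τ : Type*} [CommRing R] [Fintype σ] [Fintype τ]

/-- The linear form with coefficient vector `v`. -/
def linearForm : (σ → R) →ₗ[R] MvPolynomial σ R :=
  Fintype.linearCombination R X

theorem linearForm_apply (v : σ → R) : linearForm v = ∑ i, C (v i) * X i := by
  simp only [linearForm, Fintype.linearCombination_apply, smul_eq_C_mul]

theorem linearForm_basisFun (i : σ) :
    linearForm (Pi.basisFun R σ i) = (X i : MvPolynomial σ R) := by
  classical
  simp [linearForm_apply, Pi.single_apply]

theorem range_linearForm :
    LinearMap.range (linearForm : (σ → R) →ₗ[R] _) = homogeneousSubmodule σ R 1 := by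
  rw [linearForm, Fintype.range_linearCombination, homogeneousSubmodule_one_eq_span_X]

theorem linearForm_injective : Function.Injective (linearForm : (σ → R) →ₗ[R] _) :=
  LinearIndependent.fintypeLinearCombination_injective
    ((basisMonomials σ R).linearIndependent.comp _ (Finsupp.single_left_injective one_ne_zero))

theorem isHomogeneous_linearForm (v : σ → R) : (linearForm v).IsHomogeneous 1 := by
  rw [← mem_homogeneousSubmodule, ← range_linearForm]
  exact LinearMap.mem_range_self _ v

theorem map_linearForm {S : Type*} [CommRing S] (f : R →+* S) (v : σ → R) :
    MvPolynomial.map f (linearForm v) = linearForm (f ∘ v) := by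
  simp only [linearForm_apply, map_sum, map_mul, map_C, map_X, Function.comp_apply]

theorem span_linearForm_image_span (s : Set (σ → R)) :
    Ideal.span (linearForm '' (Submodule.span R s : Set (σ → R))) =
      Ideal.span (linearForm '' s) := by
  refine le_antisymm (Ideal.span_le.2 ?_) (Ideal.span_mono (Set.image_mono Submodule.subset_span))
  rintro _ ⟨v, hv, rfl⟩
  have h := Submodule.mem_map_of_mem (f := linearForm) hv
  rw [Submodule.map_span] at h
  exact Submodule.span_le_restrictScalars R (MvPolynomial σ R) _ h

/-- The algebra map induced on polynomial rings, seen as symmetric algebras of free modules, by a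
linear map between spaces of linear forms. -/
def linearSubst (f : (σ → R) →ₗ[R] (τ → R)) : MvPolynomial σ R →ₐ[R] MvPolynomial τ R :=
  aeval fun i => linearForm (f (Pi.basisFun R σ i))

theorem linearSubst_linearForm (f : (σ → R) →ₗ[R] (τ → R)) (v : σ → R) :
    linearSubst f (linearForm v) = linearForm (f v) := by
  have h : (linearSubst f).toLinearMap ∘ₗ linearForm = linearForm ∘ₗ f :=
    (Pi.basisFun R σ).ext fun i => by
      simp only [LinearMap.comp_apply, AlgHom.toLinearMap_apply, linearForm_basisFun, linearSubst,
        aeval_X]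
  exact LinearMap.congr_fun h v

theorem linearSubst_X (f : (σ → R) →ₗ[R] (τ → R)) (i : σ) :
    linearSubst f (X i) = linearForm (f (Pi.basisFun R σ i)) :=
  aeval_X _ i

theorem isHomogeneous_linearSubst (f : (σ → R) →ₗ[R] (τ → R)) {p : MvPolynomial σ R} {n : ℕ}
    (hp : p.IsHomogeneous n) : (linearSubst f p).IsHomogeneous n := by
  simpa only [one_mul, linearSubst] using hp.aeval _ fun _ => isHomogeneous_linearForm _

theorem linearSubst_linearSubst_of_comp_eq_id {f : (σ → R) →ₗ[R] (τ → R)}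
    {g : (τ → R) →ₗ[R] (σ → R)} (hfg : f ∘ₗ g = LinearMap.id) (p : MvPolynomial τ R) :
    linearSubst f (linearSubst g p) = p := by
  have h : (linearSubst f).comp (linearSubst g) = AlgHom.id R _ := algHom_ext fun i => by
    rw [AlgHom.comp_apply, linearSubst_X, linearSubst_linearForm, ← LinearMap.comp_apply f, hfg,
      LinearMap.id_apply, linearForm_basisFun, AlgHom.id_apply]
  exact DFunLike.congr_fun h p

theorem map_linearSubst_homogeneousSubmodule {f : (σ → R) →ₗ[R] (τ → R)}
    (hf : Function.Surjective f) (n : ℕ) :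
    (homogeneousSubmodule σ R n).map (linearSubst f).toLinearMap = homogeneousSubmodule τ R n := by
  obtain ⟨g, hfg⟩ := Module.projective_lifting_property f LinearMap.id hf
  refine le_antisymm (Submodule.map_le_iff_le_comap.2 fun p hp => isHomogeneous_linearSubst f hp) ?_
  exact fun p hp =>
    ⟨linearSubst g p, isHomogeneous_linearSubst g hp, linearSubst_linearSubst_of_comp_eq_id hfg p⟩

theorem linearSubst_surjective {f : (σ → R) →ₗ[R] (τ → R)} (hf : Function.Surjective f) :
    Function.Surjective (linearSubst f) := by
  obtain ⟨g, hfg⟩ := Module.projective_lifting_property f LinearMap.id hf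
  exact fun p => ⟨linearSubst g p, linearSubst_linearSubst_of_comp_eq_id hfg p⟩

theorem ker_linearSubst {f : (σ → R) →ₗ[R] (τ → R)} (hf : Function.Surjective f) :
    RingHom.ker (linearSubst f) = Ideal.span (linearForm '' (LinearMap.ker f : Set (σ → R))) := by
  set J := Ideal.span (linearForm '' (LinearMap.ker f : Set (σ → R)))
  refine le_antisymm (fun p hp => ?_) (Ideal.span_le.2 ?_)
  · obtain ⟨g, hfg⟩ := Module.projective_lifting_property f LinearMap.id hf
    -- Modulo `J` the section `linearSubst g` is a left inverse of `linearSubst f` as well.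
    have h : ((Ideal.Quotient.mkₐ R J).comp (linearSubst g)).comp (linearSubst f) =
        Ideal.Quotient.mkₐ R J := algHom_ext fun i => by
      simp only [AlgHom.comp_apply, linearSubst_X, linearSubst_linearForm, Ideal.Quotient.mkₐ_eq_mk]
      rw [Ideal.Quotient.eq, ← linearForm_basisFun, ← map_sub]
      refine Ideal.subset_span (Set.mem_image_of_mem _ ?_)
      rw [SetLike.mem_coe, LinearMap.mem_ker, map_sub, ← LinearMap.comp_apply f, hfg,
        LinearMap.id_apply, sub_self]
    rw [← Ideal.Quotient.eq_zero_iff_mem, ← Ideal.Quotient.mkₐ_eq_mk R, ← h, AlgHom.comp_apply,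
      RingHom.mem_ker.1 hp, map_zero]
  · rintro _ ⟨v, hv, rfl⟩
    rw [SetLike.mem_coe, RingHom.mem_ker, linearSubst_linearForm, LinearMap.mem_ker.1 hv, map_zero]

end LinearSubstitutions

section LinearIdeals

variable {F σ : Type*} [Field F] [Fintype σ]

theorem exists_surjective_ker_eq (W : Submodule F (σ → F)) {r : ℕ}
    (hr : Module.finrank F W + r = Fintype.card σ) :
    ∃ f : (σ → F) →ₗ[F] (Fin r → F), Function.Surjective f ∧ LinearMap.ker f = W := by
  have hq : Module.finrank F ((σ → F) ⧸ W) = Module.finrank F (Fin r → F) := by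
    have := W.finrank_quotient_add_finrank
    rw [Module.finrank_fintype_fun_eq_card] at this
    rw [Module.finrank_fin_fun]
    lia
  let e := LinearEquiv.ofFinrankEq _ _ hq
  refine ⟨e.toLinearMap ∘ₗ W.mkQ, e.surjective.comp W.mkQ_surjective, ?_⟩
  rw [LinearEquiv.ker_comp, Submodule.ker_mkQ]

theorem exists_linearSubst_ker_eq (W : Submodule F (σ → F)) :
    ∃ (r : ℕ) (f : (σ → F) →ₗ[F] (Fin r → F)), Function.Surjective f ∧ LinearMap.ker f = W ∧
      RingHom.ker (linearSubst f) = Ideal.span (linearForm '' (W : Set (σ → F))) := by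
  have hW : Module.finrank F W ≤ Fintype.card σ := by
    simpa only [Module.finrank_fintype_fun_eq_card] using W.finrank_le
  obtain ⟨f, hf, hker⟩ := exists_surjective_ker_eq W (Nat.add_sub_of_le hW)
  exact ⟨_, f, hf, hker, by rw [ker_linearSubst hf, hker]⟩

theorem isPrime_span_linearForm (W : Submodule F (σ → F)) :
    (Ideal.span (linearForm '' (W : Set (σ → F)))).IsPrime := by
  obtain ⟨r, f, -, -, hker⟩ := exists_linearSubst_ker_eq W
  exact hker ▸ RingHom.ker_isPrime _

theorem linearForm_mem_span_iff {W : Submodule F (σ → F)} {v : σ → F} :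
    linearForm v ∈ Ideal.span (linearForm '' (W : Set (σ → F))) ↔ v ∈ W := by
  refine ⟨fun hv => ?_, fun hv => Ideal.subset_span (Set.mem_image_of_mem _ hv)⟩
  obtain ⟨r, f, -, rfl, hker⟩ := exists_linearSubst_ker_eq W
  rw [← hker, RingHom.mem_ker, linearSubst_linearForm] at hv
  exact linearForm_injective (by rw [hv, map_zero])

-- Strictly increasing chains of spaces of linear forms span strictly increasing chains of primes.
theorem finrank_le_height_span_linearForm (W : Submodule F (σ → F)) :
    (Module.finrank F W : ℕ∞) ≤ (Ideal.span (linearForm '' (W : Set (σ → F)))).height := by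
  let 𝔭 (V : Submodule F (σ → F)) : PrimeSpectrum (MvPolynomial σ F) :=
    ⟨_, isPrime_span_linearForm V⟩
  have h𝔭 : StrictMono 𝔭 := Monotone.strictMono_of_injective
    (fun V V' h => Ideal.span_mono (Set.image_mono h))
    (fun V V' h => by
      ext v
      rw [← linearForm_mem_span_iff, ← linearForm_mem_span_iff (W := V')]
      exact SetLike.ext_iff.1 (congrArg PrimeSpectrum.asIdeal h) _)
  calc (Module.finrank F W : ℕ∞) = Order.height W := by
        rw [← Module.length_submodule, Module.length_eq_finrank]
    _ ≤ Order.height (𝔭 W) := Order.height_le_height_apply_of_strictMono 𝔭 h𝔭 W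
    _ = _ := (PrimeSpectrum.height_eq_orderHeight _).symm

end LinearIdeals

section Fibres

variable {R σ ι : Type*} [CommRing R] [Fintype σ] [Fintype ι]

theorem rank_le_height_of_linearForm_col_mem {F : Type*} [Field F] (M : Matrix σ ι F)
    {P : Ideal (MvPolynomial σ F)} (hP : ∀ i, linearForm (M.col i) ∈ P) :
    (M.rank : ℕ∞) ≤ P.height := by
  rw [Matrix.rank_eq_finrank_span_cols]
  refine (finrank_le_height_span_linearForm _).trans (Ideal.height_mono ?_)
  rw [span_linearForm_image_span, Ideal.span_le]
  rintro _ ⟨_, ⟨i, rfl⟩, rfl⟩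
  exact hP i

theorem rank_map_le_height_of_comap_C_eq_bot (K : Type*) [Field K] [Algebra R K]
    [IsFractionRing R K] (M : Matrix σ ι R) {P : Ideal (MvPolynomial σ R)} [P.IsPrime]
    (hP₀ : P.comap C = ⊥) (hP : ∀ i, linearForm (M.col i) ∈ P) :
    ((M.map (algebraMap R K)).rank : ℕ∞) ≤ P.height := by
  let _ : Algebra (MvPolynomial σ R) (MvPolynomial σ K) := algebraMvPolynomial
  have hdisj : Disjoint (((nonZeroDivisors R).map C : Submonoid (MvPolynomial σ R)) : Set _)
      (P : Set (MvPolynomial σ R)) := by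
    rw [Set.disjoint_left]
    rintro _ ⟨r, hr, rfl⟩ hrP
    have hr₀ : r ∈ P.comap C := hrP
    rw [hP₀, Ideal.mem_bot] at hr₀
    have := (algebraMap R K).domain_nontrivial
    exact nonZeroDivisors.ne_zero hr hr₀
  rw [← IsLocalization.height_map_of_disjoint (S := MvPolynomial σ K) _ P hdisj]
  refine rank_le_height_of_linearForm_col_mem _ fun i => ?_
  have h := Ideal.mem_map_of_mem (algebraMap _ (MvPolynomial σ K)) (hP i)
  rwa [algebraMap_def, map_linearForm] at h

theorem height_map_mk_ker {A S : Type*} [CommRing A] [CommRing S] {f : A →+* S}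
    (hf : Function.Surjective f) (P : Ideal A) :
    (P.map (Ideal.Quotient.mk (RingHom.ker f))).height = (P.map f).height := by
  let e := RingHom.quotientKerEquivOfSurjective hf
  calc (P.map (Ideal.Quotient.mk (RingHom.ker f))).height
      = ((P.map (Ideal.Quotient.mk (RingHom.ker f))).map (e : _ →+* S)).height :=
        (e.height_map _).symm
    _ = (P.map f).height := by rw [Ideal.map_map]; rfl

theorem height_eq_height_add_height_map_map_mk {σ : Type*} [Finite σ] [IsNoetherianRing R]
    (p : Ideal R) [p.IsPrime] (P : Ideal (MvPolynomial σ R)) [P.IsPrime] [P.LiesOver p] :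
    P.height = p.height + (P.map (MvPolynomial.map (Ideal.Quotient.mk p))).height := by
  have hf : Function.Surjective (MvPolynomial.map (σ := σ) (Ideal.Quotient.mk p)) :=
    map_surjective _ Ideal.Quotient.mk_surjective
  rw [Ideal.height_eq_height_add_of_liesOver_of_hasGoingDown p P, algebraMap_eq,
    ← height_map_mk_ker hf, ker_map, Ideal.mk_ker]

theorem height_add_rank_map_residueField_le_height [IsNoetherianRing R] (M : Matrix σ ι R)
    (p : Ideal R) [p.IsPrime] (P : Ideal (MvPolynomial σ R)) [P.IsPrime] [P.LiesOver p]
    (hP : ∀ i, linearForm (M.col i) ∈ P) :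
    p.height + ((M.map (algebraMap R p.ResidueField)).rank : ℕ∞) ≤ P.height := by
  set f := MvPolynomial.map (σ := σ) (Ideal.Quotient.mk p)
  have hf : Function.Surjective f := map_surjective _ Ideal.Quotient.mk_surjective
  have hker : RingHom.ker f ≤ P := by
    rw [ker_map, Ideal.mk_ker, Ideal.map_le_iff_le_comap]
    exact (P.over_def p).le
  have := Ideal.map_isPrime_of_surjective hf hker
  have hQ₀ : (P.map f).comap C = ⊥ := by
    refine eq_bot_iff.2 fun r hr => ?_
    obtain ⟨r, rfl⟩ := Ideal.Quotient.mk_surjective r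
    rw [Ideal.mem_comap, ← map_C, ← Ideal.mem_comap, Ideal.comap_map_of_surjective' _ hf,
      sup_eq_left.2 hker] at hr
    rw [Ideal.mem_bot, Ideal.Quotient.eq_zero_iff_mem, P.over_def p]
    exact hr
  rw [height_eq_height_add_height_map_map_mk p P]
  gcongr
  rw [IsScalarTower.algebraMap_eq R (R ⧸ p) p.ResidueField, RingHom.coe_comp, ← Matrix.map_map]
  refine rank_map_le_height_of_comap_C_eq_bot _ _ hQ₀ fun i => ?_
  have h := Ideal.mem_map_of_mem f (hP i)
  rwa [map_linearForm] at h

end Fibres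

section Presentations

open TensorProduct

variable {R E : Type*} [CommRing R] [AddCommGroup E] [Module R E]
  {σ ι : Type*} [Fintype ι]

theorem finrank_tensorProduct_le_card_of_span_eq_top {A Eₚ : Type*} [CommRing A]
    [Algebra R A] [AddCommGroup Eₚ] [Module R Eₚ] [Module A Eₚ] [IsScalarTower R A Eₚ]
    {f : E →ₗ[R] Eₚ} (hf : IsBaseChange A f) (K : Type*) [Field K] [Algebra R K] [Algebra A K]
    [IsScalarTower R A K] {t : Finset Eₚ} (ht : Submodule.span A (t : Set Eₚ) = ⊤) :
    Module.finrank K (K ⊗[R] E) ≤ t.card := by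
  classical
  have hspan : Submodule.span K (t.image (TensorProduct.mk A K Eₚ 1) : Set (K ⊗[A] Eₚ)) = ⊤ := by
    rw [Finset.coe_image, ← Submodule.baseChange_span, ht, Submodule.baseChange_top]
  rw [(hf.comp (TensorProduct.isBaseChange A Eₚ K)).equiv.finrank_eq, ← finrank_top, ← hspan]
  exact (finrank_span_finset_le_card _).trans Finset.card_image_le

theorem rank_map_algebraMap_eq_finrank_range_baseChange [Finite σ] (K : Type*) [Field K]
    [Algebra R K] (M : Matrix σ ι R) :
    (M.map (algebraMap R K)).rank =
      Module.finrank K (LinearMap.range (M.mulVecLin.baseChange K)) := by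
  classical
  let v := Algebra.TensorProduct.basis K (Pi.basisFun R σ)
  let w := Algebra.TensorProduct.basis K (Pi.basisFun R ι)
  have h : Matrix.toLin w v (M.map (algebraMap R K)) = M.mulVecLin.baseChange K := by
    rw [← Matrix.toLin_toMatrix w v (M.mulVecLin.baseChange K), LinearMap.toMatrix_baseChange,
      ← Matrix.toLin'_apply', ← Matrix.toLin_eq_toLin', LinearMap.toMatrix_toLin]
  rw [Matrix.rank_eq_finrank_range_toLin _ v w, h]

theorem finrank_tensorProduct_add_rank_map_algebraMap [Fintype σ] (K : Type*) [Field K]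
    [Algebra R K] {M : Matrix σ ι R} {π : (σ → R) →ₗ[R] E} (hπ : Function.Surjective π)
    (hker : LinearMap.ker π = LinearMap.range M.mulVecLin) :
    Module.finrank K (K ⊗[R] E) + (M.map (algebraMap R K)).rank = Fintype.card σ := by
  have hexact : Function.Exact (M.mulVecLin.baseChange K) (π.baseChange K) :=
    lTensor_exact K (LinearMap.exact_iff.2 hker) hπ
  have hsurj : Function.Surjective (π.baseChange K) := LinearMap.lTensor_surjective K hπ
  rw [rank_map_algebraMap_eq_finrank_range_baseChange, ← LinearMap.exact_iff.1 hexact,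
    ← finrank_top, ← LinearMap.range_eq_top.2 hsurj, LinearMap.finrank_range_add_finrank_ker,
    Module.finrank_eq_card_basis (Algebra.TensorProduct.basis K (Pi.basisFun R σ))]

theorem rank_map_algebraMap_of_injective [Finite σ] (K : Type*) [Field K] [Algebra R K]
    [Module.Flat R K] {M : Matrix σ ι R} (hM : Function.Injective M.mulVecLin) :
    (M.map (algebraMap R K)).rank = Fintype.card ι := by
  have hinj : Function.Injective (M.mulVecLin.baseChange K) :=
    Module.Flat.lTensor_preserves_injective_linearMap _ hM
  rw [rank_map_algebraMap_eq_finrank_range_baseChange, LinearMap.finrank_range_of_inj hinj,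
    Module.finrank_eq_card_basis (Algebra.TensorProduct.basis K (Pi.basisFun R ι))]

end Presentations

section ConditionG

/-- The condition `G_s` on a module `E` of rank `e`: the localization of `E` at a prime of height
`c` with `1 ≤ c ≤ s - 1` is generated by `c + e - 1` elements. -/
def SatisfiesG (R E : Type*) [CommRing R] [AddCommGroup E] [Module R E] (e s : ℕ) : Prop :=
  ∀ (p : Ideal R) (_ : p.IsPrime) (c : ℕ),
    ringKrullDim (Localization.AtPrime p) = (c : WithBot ℕ∞) → 1 ≤ c → c ≤ s - 1 →
    ∃ t : Finset (LocalizedModule p.primeCompl E), t.card ≤ c + e - 1 ∧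
      Submodule.span (Localization.AtPrime p) (t : Set (LocalizedModule p.primeCompl E)) = ⊤

theorem SatisfiesG.le_height {R E : Type*} [CommRing R] [IsNoetherianRing R] [IsDomain R]
    [AddCommGroup E] [Module R E] {d e : ℕ} (hG : SatisfiesG R E e d)
    {φ : Matrix (Fin (d + e)) (Fin d) R} (hφ : Function.Injective φ.mulVecLin)
    {π : (Fin (d + e) → R) →ₗ[R] E} (hπ : Function.Surjective π)
    (hker : LinearMap.ker π = LinearMap.range φ.mulVecLin)
    (P : Ideal (MvPolynomial (Fin (d + e)) R)) [P.IsPrime] (hP : ∀ i, linearForm (φ.col i) ∈ P) :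
    (d : ℕ∞) ≤ P.height := by
  set p := P.under R
  obtain ⟨c, hc⟩ := ENat.ne_top_iff_exists.1 (Ideal.height_ne_top_of_isPrime (I := p))
  by_cases hc₀ : c = 0
  · have hp : p = ⊥ := by rw [← Ideal.height_eq_zero_iff_eq_bot, ← hc, hc₀, Nat.cast_zero]
    have := IsLocalization.flat (FractionRing R) (nonZeroDivisors R)
    have hrank := rank_map_le_height_of_comap_C_eq_bot (FractionRing R) φ hp hP
    rwa [rank_map_algebraMap_of_injective (FractionRing R) hφ, Fintype.card_fin] at hrank
  have hheight := height_add_rank_map_residueField_le_height φ p P hP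
  rw [← hc] at hheight
  refine le_trans ?_ hheight
  norm_cast
  by_cases hcd : d ≤ c
  · lia
  have hdim : ringKrullDim (Localization.AtPrime p) = (c : WithBot ℕ∞) := by
    rw [IsLocalization.AtPrime.ringKrullDim_eq_height p, ← hc]
    rfl
  obtain ⟨t, ht, hspan⟩ := hG p inferInstance c hdim (by lia) (by lia)
  have hgens := finrank_tensorProduct_le_card_of_span_eq_top
    (LocalizedModule.isBaseChange p.primeCompl (M := E)) p.ResidueField hspan
  have hexact := finrank_tensorProduct_add_rank_map_algebraMap p.ResidueField hπ hker
  rw [Fintype.card_fin] at hexact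
  lia

end ConditionG

section IdealOfVars

variable {R σ : Type*} [CommRing R]

theorem idealOfVars_eq_ker_constantCoeff :
    idealOfVars σ R = RingHom.ker (constantCoeff (R := R) (σ := σ)) := by
  ext p
  rw [← pow_one (idealOfVars σ R), mem_pow_idealOfVars_iff']
  simp only [Nat.lt_one_iff, Finsupp.degree_eq_zero_iff, forall_eq, RingHom.mem_ker,
    constantCoeff_eq]

theorem C_mem_idealOfVars_iff {r : R} : (C r : MvPolynomial σ R) ∈ idealOfVars σ R ↔ r = 0 := by
  rw [idealOfVars_eq_ker_constantCoeff, RingHom.mem_ker, constantCoeff_C]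

theorem isPrime_idealOfVars [IsDomain R] : (idealOfVars σ R).IsPrime := by
  rw [idealOfVars_eq_ker_constantCoeff]
  exact RingHom.ker_isPrime _

theorem mem_idealOfVars_of_isHomogeneous {p : MvPolynomial σ R} {n : ℕ} (hp : p.IsHomogeneous n)
    (hn : n ≠ 0) : p ∈ idealOfVars σ R := by
  rw [idealOfVars_eq_ker_constantCoeff, RingHom.mem_ker, constantCoeff_eq]
  exact hp.coeff_eq_zero (by simpa using hn.symm)

end IdealOfVars

section MinimalFamilies

variable {A ι : Type*} [CommRing A] [Fintype ι]

/-- A finite family all of whose syzygies have coefficients in `𝔪`; over a local or graded ring with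
(homogeneous) maximal ideal `𝔪`, this says that it minimally generates an ideal. -/
def IsMinimalFamily (𝔪 : Ideal A) (f : ι → A) : Prop :=
  ∀ c : ι → A, ∑ i, c i * f i = 0 → ∀ i, c i ∈ 𝔪

theorem IsMinimalFamily.of_card_le_height [IsNoetherianRing A] {𝔪 : Ideal A} [𝔪.IsPrime]
    {f : ι → A} (hf : ∀ i, f i ∈ 𝔪)
    (hheight : ∀ P : Ideal A, P.IsPrime → (∀ i, f i ∈ P) → (Fintype.card ι : ℕ∞) ≤ P.height) :
    IsMinimalFamily 𝔪 f := by
  classical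
  intro c hc i
  by_contra hci
  let s : Finset A := (Finset.univ.erase i).image f
  obtain ⟨Q, hQ, hQ𝔪⟩ := Ideal.exists_minimalPrimes_le
    (Ideal.span_le.2 fun x hx => by obtain ⟨j, -, rfl⟩ := Finset.mem_image.1 hx; exact hf j :
      Ideal.span (s : Set A) ≤ 𝔪)
  have := hQ.1.1
  have hne : ∀ j ≠ i, f j ∈ Q := fun j hj => hQ.1.2 <| Ideal.subset_span <|
    Finset.mem_image_of_mem f (Finset.mem_erase.2 ⟨hj, Finset.mem_univ j⟩)
  have hfi : f i ∈ Q := by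
    refine (Ideal.IsPrime.mem_or_mem ‹_› ?_).resolve_left fun h => hci (hQ𝔪 h)
    rw [← Finset.add_sum_erase _ _ (Finset.mem_univ i)] at hc
    rw [eq_neg_of_add_eq_zero_left hc]
    exact neg_mem (sum_mem fun j hj => Ideal.mul_mem_left _ _ (hne j (Finset.ne_of_mem_erase hj)))
  have hcard : s.card < Fintype.card ι :=
    Finset.card_image_le.trans_lt (Finset.card_erase_lt_of_mem (Finset.mem_univ i))
  have hle := (hheight Q this fun j => if hj : j = i then hj ▸ hfi else hne j hj).trans
    (Ideal.height_le_card_of_mem_minimalPrimes_span_finset hQ)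
  exact absurd (Nat.cast_le.1 hle) (not_le.2 hcard)

end MinimalFamilies

section GradedPieces

variable {F σ τ : Type*} [Field F]

theorem finrank_homogeneousSubmodule [Fintype σ] (n : ℕ) :
    Module.finrank F (homogeneousSubmodule σ F n) = (Fintype.card σ).multichoose n := by
  classical
  have hs : {d : σ →₀ ℕ | d.degree = n} = (Finset.univ.finsuppAntidiag n : Finset (σ →₀ ℕ)) := by
    ext d
    simp [Finsupp.degree_eq_sum]
  rw [homogeneousSubmodule_eq_finsupp_supported, hs, ← restrictSupport,
    Module.finrank_eq_nat_card_basis (basisRestrictSupport F _), ← Finset.card_univ,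
    ← Finset.card_finsuppAntidiag_nat_eq_multichoose]
  exact Nat.card_eq_finsetCard _

/-- The component of degree `n` of the quotient of a polynomial ring by an ideal `J`, for the
standard grading. -/
def gradedPiece (J : Ideal (MvPolynomial σ F)) (n : ℕ) : Submodule F (MvPolynomial σ F ⧸ J) :=
  (homogeneousSubmodule σ F n).map (Ideal.Quotient.mkₐ F J).toLinearMap

theorem finrank_gradedPiece_add_finrank_inf [Fintype σ] (J : Ideal (MvPolynomial σ F)) (n : ℕ) :
    Module.finrank F (gradedPiece J n) +
        Module.finrank F (homogeneousSubmodule σ F n ⊓ J.restrictScalars F : Submodule F _) =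
      (Fintype.card σ).multichoose n := by
  have : Module.Finite F (homogeneousSubmodule σ F n) :=
    Module.Finite.iff_fg.2 (homogeneousSubmodule_fg σ F n)
  set A := homogeneousSubmodule σ F n
  set f := (Ideal.Quotient.mkₐ F J).toLinearMap
  have hker : LinearMap.ker f = J.restrictScalars F := by
    ext x
    exact Ideal.Quotient.eq_zero_iff_mem
  have hinf : Module.finrank F (A ⊓ LinearMap.ker f : Submodule F _) =
      Module.finrank F (LinearMap.ker (f.domRestrict A)) := by
    rw [LinearMap.ker_domRestrict, ← Submodule.map_comap_subtype]
    exact (Submodule.equivMapOfInjective _ A.subtype_injective _).finrank_eq.symm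
  rw [← finrank_homogeneousSubmodule (F := F) n, ← hker, hinf, gradedPiece,
    ← LinearMap.range_domRestrict, LinearMap.finrank_range_add_finrank_ker]

theorem finrank_gradedPiece_comap {h : MvPolynomial σ F →ₐ[F] MvPolynomial τ F} {n : ℕ}
    (hh : (homogeneousSubmodule σ F n).map h.toLinearMap = homogeneousSubmodule τ F n)
    (J : Ideal (MvPolynomial τ F)) :
    Module.finrank F (gradedPiece (J.comap h) n) = Module.finrank F (gradedPiece J n) := by
  let f := Ideal.quotientMapₐ J h le_rfl
  have hf : Function.Injective f := Ideal.quotientMap_injective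
  have hmap : (gradedPiece (J.comap h) n).map f.toLinearMap = gradedPiece J n := by
    rw [gradedPiece, gradedPiece, ← hh, ← Submodule.map_comp, ← Submodule.map_comp]
    rfl
  rw [← hmap]
  exact (Submodule.equivMapOfInjective f.toLinearMap hf _).finrank_eq

end GradedPieces

section HomogeneousSpans

variable {R σ : Type*} [CommRing R]

theorem homogeneousComponent_mul_of_lt {r : MvPolynomial σ R} {m n : ℕ} (hr : r.IsHomogeneous n)
    (hmn : m < n) (c : MvPolynomial σ R) : homogeneousComponent m (c * r) = 0 := by
  classical
  let _ := gradedAlgebra (σ := σ) (R := R)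
  rw [← decomposition.decompose'_apply]
  exact DirectSum.coe_decompose_mul_of_right_mem_of_not_le (homogeneousSubmodule σ R) hr hmn.not_ge

theorem homogeneousComponent_mul_self {r : MvPolynomial σ R} {n : ℕ} (hr : r.IsHomogeneous n)
    (c : MvPolynomial σ R) : homogeneousComponent n (c * r) = constantCoeff c • r := by
  classical
  let _ := gradedAlgebra (σ := σ) (R := R)
  have hmul := DirectSum.coe_decompose_mul_of_right_mem_of_le (homogeneousSubmodule σ R) (a := c)
    hr le_rfl
  rw [Nat.sub_self] at hmul
  have hcomp (x : MvPolynomial σ R) (i : ℕ) :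
      (DirectSum.decompose (homogeneousSubmodule σ R) x i : MvPolynomial σ R) =
        homogeneousComponent i x := decomposition.decompose'_apply x i
  rwa [hcomp, hcomp, homogeneousComponent_zero, ← smul_eq_C_mul] at hmul

variable {κ : Type*} [Finite κ] {r : κ → MvPolynomial σ R} {n : ℕ}

theorem homogeneousSubmodule_inf_span_eq_bot (hr : ∀ i, (r i).IsHomogeneous n) {m : ℕ}
    (hmn : m < n) :
    homogeneousSubmodule σ R m ⊓ (Ideal.span (Set.range r)).restrictScalars R = ⊥ := by
  have := Fintype.ofFinite κ
  refine eq_bot_iff.2 fun x hx => ?_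
  have hcomp : homogeneousComponent m x = x := homogeneousComponent_eq_self hx.1
  obtain ⟨c, rfl⟩ := Ideal.mem_span_range_iff_exists_fun.1 hx.2
  rw [Submodule.mem_bot, ← hcomp, map_sum]
  exact Finset.sum_eq_zero fun i _ => homogeneousComponent_mul_of_lt (hr i) hmn _

theorem homogeneousSubmodule_inf_span_eq_span (hr : ∀ i, (r i).IsHomogeneous n) :
    homogeneousSubmodule σ R n ⊓ (Ideal.span (Set.range r)).restrictScalars R =
      Submodule.span R (Set.range r) := by
  have := Fintype.ofFinite κ
  refine le_antisymm (fun x hx => ?_) (Submodule.span_le.2 (Set.range_subset_iff.2 fun i => ?_))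
  · have hcomp : homogeneousComponent n x = x := homogeneousComponent_eq_self hx.1
    obtain ⟨c, rfl⟩ := Ideal.mem_span_range_iff_exists_fun.1 hx.2
    rw [← hcomp, map_sum]
    refine sum_mem fun i _ => ?_
    rw [homogeneousComponent_mul_self (hr i)]
    exact Submodule.smul_mem _ _ (Submodule.subset_span (Set.mem_range_self i))
  · exact Submodule.mem_inf.2 ⟨hr i, Ideal.subset_span (Set.mem_range_self i)⟩

end HomogeneousSpans

section GradedQuotients

variable {F σ κ : Type*} [Field F] [Fintype σ] {r : κ → MvPolynomial σ F} {n : ℕ}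

theorem finrank_gradedPiece_span_of_lt [Finite κ] (hr : ∀ i, (r i).IsHomogeneous n) {m : ℕ}
    (hmn : m < n) :
    Module.finrank F (gradedPiece (Ideal.span (Set.range r)) m) =
      (Fintype.card σ).multichoose m := by
  rw [← finrank_gradedPiece_add_finrank_inf (Ideal.span (Set.range r)),
    homogeneousSubmodule_inf_span_eq_bot hr hmn, finrank_bot, add_zero]

theorem finrank_gradedPiece_span_add_card [Fintype κ] (hr : ∀ i, (r i).IsHomogeneous n)
    (hli : LinearIndependent F r) :
    Module.finrank F (gradedPiece (Ideal.span (Set.range r)) n) + Fintype.card κ =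
      (Fintype.card σ).multichoose n := by
  rw [← finrank_gradedPiece_add_finrank_inf (Ideal.span (Set.range r)),
    homogeneousSubmodule_inf_span_eq_span hr, finrank_span_eq_card hli]

end GradedQuotients

section CompleteIntersections

variable {F σ ι κ : Type*} [Field F] [Fintype ι] [Fintype κ]

theorem IsMinimalFamily.linearIndependent {f : ι → MvPolynomial σ F}
    (hf : IsMinimalFamily (idealOfVars σ F) f) : LinearIndependent F f := by
  rw [Fintype.linearIndependent_iff]
  intro c hc i
  simp only [smul_eq_C_mul] at hc
  exact C_mem_idealOfVars_iff.1 (hf _ hc i)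

theorem IsMinimalFamily.linearIndependent_comp {A : Type*} [CommRing A] [Algebra F A]
    {g : ι → MvPolynomial σ F} {q : κ → MvPolynomial σ F}
    (hgq : IsMinimalFamily (idealOfVars σ F) (Sum.elim g q))
    {h : MvPolynomial σ F →ₐ[F] A} (hker : RingHom.ker h = Ideal.span (Set.range g)) :
    LinearIndependent F (h ∘ q) := by
  rw [Fintype.linearIndependent_iff]
  intro b hb j
  have hmem : ∑ j, b j • q j ∈ RingHom.ker h := by
    simpa only [RingHom.mem_ker, map_sum, map_smul, Function.comp_apply] using hb
  rw [hker, Ideal.mem_span_range_iff_exists_fun] at hmem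
  obtain ⟨c, hc⟩ := hmem
  have hsyz : ∑ i, Sum.elim (-c) (C ∘ b) i * Sum.elim g q i = 0 := by
    simp only [Fintype.sum_sum_type, Sum.elim_inl, Sum.elim_inr, Pi.neg_apply, neg_mul,
      Finset.sum_neg_distrib, hc, Function.comp_apply, smul_eq_C_mul, neg_add_cancel]
  exact C_mem_idealOfVars_iff.1 (hgq _ hsyz (Sum.inr j))

variable [Fintype σ]

theorem IsMinimalFamily.exists_finrank_gradedPiece_eq {g : ι → MvPolynomial σ F}
    {q : κ → MvPolynomial σ F} {r n : ℕ} (hg : ∀ i, (g i).IsHomogeneous 1)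
    (hq : ∀ i, (q i).IsHomogeneous n)
    (hgq : IsMinimalFamily (idealOfVars σ F) (Sum.elim g q))
    (hcard : Fintype.card ι + r = Fintype.card σ) :
    ∃ q' : κ → MvPolynomial (Fin r) F, (∀ i, (q' i).IsHomogeneous n) ∧ LinearIndependent F q' ∧
      ∀ m, Module.finrank F (gradedPiece (Ideal.span (Set.range (Sum.elim g q))) m) =
        Module.finrank F (gradedPiece (Ideal.span (Set.range q')) m) := by
  have hrange (i : ι) : ∃ v, linearForm v = g i := by
    rw [← LinearMap.mem_range, range_linearForm]
    exact hg i
  choose v hv using hrange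
  have hgv : g = linearForm ∘ v := funext fun i => (hv i).symm
  have hv_li : LinearIndependent F v := by
    have hg_li := hgq.linearIndependent.comp _ Sum.inl_injective
    rw [Sum.elim_comp_inl, hgv] at hg_li
    exact hg_li.of_comp linearForm
  obtain ⟨f, hf, hker⟩ := exists_surjective_ker_eq (Submodule.span F (Set.range v)) (r := r)
    (by rw [finrank_span_eq_card hv_li, hcard])
  set h := linearSubst f
  have hkerh : RingHom.ker h = Ideal.span (Set.range g) := by
    rw [ker_linearSubst hf, hker, span_linearForm_image_span, ← Set.range_comp, hgv]
  refine ⟨h ∘ q, fun i => isHomogeneous_linearSubst f (hq i), hgq.linearIndependent_comp hkerh,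
    fun m => ?_⟩
  have hcomap : Ideal.span (Set.range (Sum.elim g q)) =
      (Ideal.span (Set.range (h ∘ q))).comap h := by
    rw [Set.range_comp, ← Ideal.map_span, Ideal.comap_map_of_surjective' h
      (linearSubst_surjective hf), hkerh, Set.Sum.elim_range, Ideal.span_union, sup_comm]
  rw [hcomap, finrank_gradedPiece_comap (map_linearSubst_homogeneousSubmodule hf m)]

end CompleteIntersections

section LocalizedRanks

open nonZeroDivisors

universe u

theorem rank_span_image_of_isLocalizedModule {A K : Type*} {M N : Type u} [CommRing A] [CommRing K]
    [Algebra A K] [IsFractionRing A K] [AddCommGroup M] [Module A M] [AddCommGroup N] [Module A N]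
    [Module K N] [IsScalarTower A K N] (f : M →ₗ[A] N) [IsLocalizedModule A⁰ f] (s : Set M) :
    Module.rank A (Submodule.span A s) = Module.rank K (Submodule.span K (f '' s)) := by
  have := Submodule.isLocalizedModule K A⁰ f (Submodule.span A s)
  rw [← Submodule.localized'_span K A⁰ f, IsLocalization.rank_eq K A⁰ le_rfl,
    IsLocalizedModule.rank_eq A⁰ le_rfl (Submodule.toLocalized' K A⁰ f (Submodule.span A s))]

instance {A S S' : Type*} [CommRing A] [CommRing S] [CommRing S'] [Algebra A S] [Algebra S S']
    [Algebra A S'] [IsScalarTower A S S'] (I : Ideal S) :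
    IsScalarTower A (S ⧸ I) (S' ⧸ I.map (algebraMap S S')) :=
  IsScalarTower.of_algebraMap_eq fun a =>
    congrArg (Ideal.Quotient.mk _) (IsScalarTower.algebraMap_apply A S S' a)

theorem isLocalizedModule_quotient_map {A S S' : Type*} [CommRing A] [CommRing S] [CommRing S']
    [Algebra A S] [Algebra S S'] [Algebra A S'] [IsScalarTower A S S'] (M : Submonoid A)
    [IsLocalization (Algebra.algebraMapSubmonoid S M) S'] (I : Ideal S) :
    IsLocalizedModule M (IsScalarTower.toAlgHom A (S ⧸ I)
      (S' ⧸ I.map (algebraMap S S'))).toLinearMap := by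
  rw [isLocalizedModule_iff_isLocalization, ← Algebra.algebraMapSubmonoid_map_map (A := S)]
  infer_instance

theorem rank_span_image_mk {A K : Type*} {S S' : Type u} [CommRing A] [CommRing K]
    [Algebra A K] [IsFractionRing A K] [CommRing S] [CommRing S']
    [Algebra A S] [Algebra S S'] [Algebra A S'] [IsScalarTower A S S'] [Algebra K S']
    [IsScalarTower A K S'] [IsLocalization (Algebra.algebraMapSubmonoid S A⁰) S'] (I : Ideal S)
    (s : Set S) : Module.rank A (Submodule.span A (Ideal.Quotient.mk I '' s)) =
      Module.rank K (Submodule.span K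
        (Ideal.Quotient.mk (I.map (algebraMap S S')) '' (algebraMap S S' '' s))) := by
  have := isLocalizedModule_quotient_map (S' := S') A⁰ I
  rw [rank_span_image_of_isLocalizedModule (K := K) (IsScalarTower.toAlgHom A (S ⧸ I)
    (S' ⧸ I.map (algebraMap S S'))).toLinearMap, Set.image_image, Set.image_image]
  rfl

end LocalizedRanks

section WeightedHomogeneous

variable {A A' σ τ M : Type*} [CommSemiring A] [CommSemiring A'] [AddCommMonoid M]

theorem isWeightedHomogeneous_map {w : σ → M} {w' : τ → M}
    (f : MvPolynomial σ A →+* MvPolynomial τ A') (hC : ∀ a, (f (C a)).IsWeightedHomogeneous w' 0)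
    (hX : ∀ i, (f (X i)).IsWeightedHomogeneous w' (w i)) {g : MvPolynomial σ A} {m : M}
    (hg : g.IsWeightedHomogeneous w m) : (f g).IsWeightedHomogeneous w' m := by
  rw [← g.support_sum_monomial_coeff, map_sum]
  refine (weightedHomogeneousSubmodule A' w' m).sum_mem fun s hs => ?_
  have hw : Finsupp.weight w s = m := hg (mem_support_iff.1 hs)
  rw [Finsupp.weight_apply] at hw
  rw [mem_weightedHomogeneousSubmodule, monomial_eq, map_mul, Finsupp.prod, map_prod, ← hw,
    ← zero_add (s.sum _)]
  refine (hC _).mul (IsWeightedHomogeneous.prod _ _ _ fun i _ => ?_)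
  rw [map_pow]
  exact (hX i).pow _

theorem isWeightedHomogeneous_rename {w : τ → M} {f : σ → τ} {a : M} (hf : ∀ i, w (f i) = a)
    {g : MvPolynomial σ A} {m : ℕ} (hg : g.IsHomogeneous m) :
    (rename f g).IsWeightedHomogeneous w (m • a) := by
  have hga : g.IsWeightedHomogeneous (fun _ => a) (m • a) := fun s hs => by
    rw [← hg hs, Finsupp.weight_apply, Finsupp.weight_apply, Finsupp.sum, Finsupp.sum,
      Finset.sum_smul]
    simp
  refine isWeightedHomogeneous_map (rename f : _ →ₐ[A] MvPolynomial τ A).toRingHom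
    (fun r => ?_) (fun i => ?_) hga
  · simpa using isWeightedHomogeneous_C w r
  · simpa [hf] using! isWeightedHomogeneous_X A w (f i)

end WeightedHomogeneous

section GenericFibre

variable {k d n}

theorem sumAlgEquiv_algebraMap (t : T k n) :
    sumAlgEquiv k (Fin d) (Fin n) (algebraMap _ _ t) = C t :=
  DFunLike.congr_fun (sumAlgEquiv_comp_rename_inr k (Fin d) (Fin n)) t

/-- The coordinate ring `K[x_1,…,x_d]` of the generic fibre of `T → B`, where `K` is the field of
fractions of `T`. -/
abbrev GenericFibre (k : Type) [Field k] (d n : ℕ) :=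
  MvPolynomial (Fin d) (FractionRing (T k n))

instance : Algebra (B k d n) (GenericFibre k d n) :=
  ((MvPolynomial.map (algebraMap (T k n) (FractionRing (T k n)))).comp
    (sumAlgEquiv k (Fin d) (Fin n) : B k d n →+* MvPolynomial (Fin d) (T k n))).toAlgebra

theorem algebraMap_genericFibre (b : B k d n) :
    algebraMap (B k d n) (GenericFibre k d n) b =
      MvPolynomial.map (algebraMap _ _) (sumAlgEquiv k (Fin d) (Fin n) b) :=
  rfl

theorem algebraMap_genericFibre_X_inl (i : Fin d) :
    algebraMap (B k d n) (GenericFibre k d n) (X (Sum.inl i)) = X i := by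
  simp [algebraMap_genericFibre]

theorem algebraMap_genericFibre_X_inr (j : Fin n) :
    algebraMap (B k d n) (GenericFibre k d n) (X (Sum.inr j)) =
      C (algebraMap (T k n) _ (X j)) := by
  simp [algebraMap_genericFibre]

theorem algebraMap_genericFibre_rename_inl (p : MvPolynomial (Fin d) k) :
    algebraMap (B k d n) (GenericFibre k d n) (rename Sum.inl p) =
      MvPolynomial.map (algebraMap k (FractionRing (T k n))) p := by
  have h : sumAlgEquiv k (Fin d) (Fin n) (rename Sum.inl p) = p.map (algebraMap k (T k n)) :=
    DFunLike.congr_fun (sumAlgEquiv_comp_rename_inl k (Fin d) (Fin n)) p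
  rw [algebraMap_genericFibre, h, map_map, ← IsScalarTower.algebraMap_eq]

instance : IsScalarTower (T k n) (B k d n) (GenericFibre k d n) :=
  IsScalarTower.of_algebraMap_eq fun t => by
    rw [algebraMap_genericFibre, sumAlgEquiv_algebraMap, map_C]
    rfl

instance : IsLocalization (Algebra.algebraMapSubmonoid (B k d n) (nonZeroDivisors (T k n)))
    (GenericFibre k d n) := by
  let _ : Algebra (MvPolynomial (Fin d) (T k n)) (GenericFibre k d n) := algebraMvPolynomial
  have := IsLocalization.isLocalization_of_base_ringEquiv
    ((nonZeroDivisors (T k n)).map (C (σ := Fin d))) (GenericFibre k d n)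
    (sumAlgEquiv k (Fin d) (Fin n)).symm.toRingEquiv
  convert! this
  ext b
  simp only [Algebra.algebraMapSubmonoid, Submonoid.mem_map, exists_exists_and_eq_and]
  refine exists_congr fun t => and_congr_right fun _ => ?_
  rw [← sumAlgEquiv_algebraMap]
  simp

theorem isHomogeneous_algebraMap_genericFibre {g : B k d n} {j : ℕ}
    (hg : g.IsWeightedHomogeneous (wx d n) j) :
    (algebraMap (B k d n) (GenericFibre k d n) g).IsHomogeneous j := by
  refine isWeightedHomogeneous_map _ (fun a => ?_) (Sum.rec (fun i => ?_) fun i => ?_) hg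
  · simpa [algebraMap_genericFibre] using! isHomogeneous_C (Fin d) _
  · rw [algebraMap_genericFibre_X_inl]
    exact isHomogeneous_X _ i
  · rw [algebraMap_genericFibre_X_inr]
    exact isHomogeneous_C _ _

theorem span_algebraMap_genericFibre_image (j : ℕ) :
    Submodule.span (FractionRing (T k n)) (algebraMap (B k d n) (GenericFibre k d n) ''
      {g | g.IsWeightedHomogeneous (wx d n) j}) =
      homogeneousSubmodule (Fin d) (FractionRing (T k n)) j := by
  refine le_antisymm (Submodule.span_le.2 ?_) ?_
  · rintro _ ⟨g, hg, rfl⟩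
    exact isHomogeneous_algebraMap_genericFibre hg
  · rw [homogeneousSubmodule_eq_finsupp_supported, ← restrictSupport, restrictSupport_eq_span]
    refine Submodule.span_mono ?_
    rintro _ ⟨s, hs, rfl⟩
    have hx := isWeightedHomogeneous_rename (w := wx d n) (f := Sum.inl) (a := 1) (fun _ => rfl)
      (isHomogeneous_monomial (1 : k) hs)
    rw [smul_eq_mul, mul_one] at hx
    exact ⟨_, hx, by rw [algebraMap_genericFibre_rename_inl, map_monomial, map_one]⟩

theorem rank_SxDeg (I : Ideal (B k d n)) (j : ℕ) :
    Module.rank (T k n) (SxDeg k d n I j) = Module.rank (FractionRing (T k n))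
      (gradedPiece (I.map (algebraMap (B k d n) (GenericFibre k d n))) j) := by
  rw [SxDeg, rank_span_image_mk (K := FractionRing (T k n)) (S' := GenericFibre k d n), gradedPiece,
    ← span_algebraMap_genericFibre_image, Submodule.map_span]
  rfl

end GenericFibre

section ComplementaryQuadrics

variable {F σ ι κ : Type*} [Field F] [Fintype σ] [Fintype ι] [Fintype κ]

theorem IsMinimalFamily.comp_equiv {A : Type*} [CommRing A] {𝔪 : Ideal A} {f : κ → A}
    (hf : IsMinimalFamily 𝔪 f) (ε : ι ≃ κ) : IsMinimalFamily 𝔪 (f ∘ ε) := by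
  intro c hc i
  have h := hf (c ∘ ε.symm) (by rw [← hc, ← ε.sum_comp]; simp) (ε i)
  rwa [Function.comp_apply, ε.symm_apply_apply] at h

theorem IsMinimalFamily.finrank_gradedPiece_one_and_two {g : ι → MvPolynomial σ F}
    {q : κ → MvPolynomial σ F} (hg : ∀ i, (g i).IsHomogeneous 1)
    (hq : ∀ i, (q i).IsHomogeneous 2)
    (hgq : IsMinimalFamily (idealOfVars σ F) (Sum.elim g q))
    (hι : Fintype.card ι + 2 = Fintype.card σ) (hκ : Fintype.card κ = 2) :
    Module.finrank F (gradedPiece (Ideal.span (Set.range (Sum.elim g q))) 1) = 2 ∧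
      Module.finrank F (gradedPiece (Ideal.span (Set.range (Sum.elim g q))) 2) = 1 := by
  obtain ⟨q', hq', hli, hrank⟩ := hgq.exists_finrank_gradedPiece_eq hg hq hι
  have h := finrank_gradedPiece_span_add_card hq' hli
  rw [hrank, hrank, finrank_gradedPiece_span_of_lt hq' one_lt_two, Fintype.card_fin,
    Nat.multichoose_two]
  rw [hκ, Fintype.card_fin, Nat.multichoose_two] at h
  exact ⟨rfl, Nat.add_right_cancel h⟩

end ComplementaryQuadrics

section SymmetricAlgebra

variable {k d n} {e : ℕ}

/-- The linear form `∑ j, v_j y_j` of `B` attached to a vector `v` over `R`; the entries of the row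
`[y_1 … y_n] φ` are the forms attached to the columns of `φ`. -/
def relationForm (v : Fin n → MvPolynomial (Fin d) k) : B k d n :=
  ∑ j, rename Sum.inl (v j) * X (Sum.inr j)

theorem isWeightedHomogeneous_relationForm {M : Type*} [AddCommMonoid M] {w : Fin d ⊕ Fin n → M}
    {a b : M} (ha : ∀ i, w (Sum.inl i) = a) (hb : ∀ j, w (Sum.inr j) = b)
    {v : Fin n → MvPolynomial (Fin d) k} {m : ℕ} (hv : ∀ j, (v j).IsHomogeneous m) :
    (relationForm v).IsWeightedHomogeneous w (m • a + b) := by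
  refine (weightedHomogeneousSubmodule k w _).sum_mem fun j _ => ?_
  rw [← hb j]
  exact (isWeightedHomogeneous_rename ha (hv j)).mul (isWeightedHomogeneous_X k w _)

theorem isHomogeneous_algebraMap_relationForm {v : Fin n → MvPolynomial (Fin d) k} {m : ℕ}
    (hv : ∀ j, (v j).IsHomogeneous m) :
    (algebraMap (B k d n) (GenericFibre k d n) (relationForm v)).IsHomogeneous m := by
  have h := isWeightedHomogeneous_relationForm (w := wx d n) (a := 1) (b := 0) (fun _ => rfl)
    (fun _ => rfl) hv
  rw [smul_eq_mul, mul_one, add_zero] at h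
  exact isHomogeneous_algebraMap_genericFibre h

theorem exists_ringEquiv_relationForm_eq_linearForm :
    ∃ ε : B k d n ≃+* MvPolynomial (Fin n) (MvPolynomial (Fin d) k),
      ∀ v, ε (relationForm v) = linearForm v := by
  let ε := (renameEquiv k (Equiv.sumComm (Fin d) (Fin n))).trans (sumAlgEquiv k (Fin n) (Fin d))
  have hC (p : MvPolynomial (Fin d) k) : ε (rename Sum.inl p) = C p := by
    have h : sumAlgEquiv k (Fin n) (Fin d) (rename Sum.inr p) = C p :=
      DFunLike.congr_fun (sumAlgEquiv_comp_rename_inr k (Fin n) (Fin d)) p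
    rw [AlgEquiv.trans_apply, renameEquiv_apply, rename_rename, ← h]
    rfl
  have hX (j : Fin n) : ε (X (Sum.inr j)) = X j := by simp [ε]
  refine ⟨ε.toRingEquiv, fun v => ?_⟩
  change ε (relationForm v) = _
  simp only [relationForm, linearForm_apply, map_sum, map_mul, hC, hX]

theorem SatisfiesG.le_height_of_relationForm_mem {E : Type*} [AddCommGroup E]
    [Module (MvPolynomial (Fin d) k) E] (hG : SatisfiesG (MvPolynomial (Fin d) k) E e d)
    {φ : Matrix (Fin (d + e)) (Fin d) (MvPolynomial (Fin d) k)}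
    (hφ : Function.Injective φ.mulVecLin)
    {π : (Fin (d + e) → MvPolynomial (Fin d) k) →ₗ[MvPolynomial (Fin d) k] E}
    (hπ : Function.Surjective π) (hker : LinearMap.ker π = LinearMap.range φ.mulVecLin)
    (P : Ideal (B k d (d + e))) [P.IsPrime] (hP : ∀ i, relationForm (φ.col i) ∈ P) :
    (d : ℕ∞) ≤ P.height := by
  obtain ⟨ε, hε⟩ := exists_ringEquiv_relationForm_eq_linearForm (k := k) (d := d) (n := d + e)
  rw [← RingEquiv.height_comap ε.symm]
  refine hG.le_height hφ hπ hker _ fun i => ?_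
  rw [Ideal.mem_comap, ← hε]
  simpa using hP i

theorem SatisfiesG.isMinimalFamily {E : Type*} [AddCommGroup E]
    [Module (MvPolynomial (Fin d) k) E] (hG : SatisfiesG (MvPolynomial (Fin d) k) E e d)
    {φ : Matrix (Fin (d + e)) (Fin d) (MvPolynomial (Fin d) k)}
    (hφ : Function.Injective φ.mulVecLin)
    {π : (Fin (d + e) → MvPolynomial (Fin d) k) →ₗ[MvPolynomial (Fin d) k] E}
    (hπ : Function.Surjective π) (hker : LinearMap.ker π = LinearMap.range φ.mulVecLin)
    {a : Fin d → ℕ} (ha : ∀ i, a i ≠ 0) (hdeg : ∀ j i, (φ j i).IsHomogeneous (a i)) :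
    IsMinimalFamily (idealOfVars (Fin d) (FractionRing (T k (d + e))))
      fun i => algebraMap (B k d (d + e)) (GenericFibre k d (d + e)) (relationForm (φ.col i)) := by
  have := isPrime_idealOfVars (σ := Fin d) (R := FractionRing (T k (d + e)))
  refine .of_card_le_height (fun i => mem_idealOfVars_of_isHomogeneous
    (isHomogeneous_algebraMap_relationForm fun j => hdeg j i) (ha i)) fun P hP hmem => ?_
  rw [Fintype.card_fin, ← IsLocalization.height_under (Algebra.algebraMapSubmonoid (B k d (d + e))
    (nonZeroDivisors (T k (d + e)))) P]
  exact hG.le_height_of_relationForm_mem hφ hπ hker _ hmem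

theorem aeval_relationForm_of_constantCoeff_eq_zero {v : Fin n → MvPolynomial (Fin d) k}
    (hv : ∀ j, constantCoeff (v j) = 0) :
    aeval (Sum.elim 0 X : Fin d ⊕ Fin n → T k n) (relationForm v) = 0 := by
  rw [relationForm, map_sum]
  refine Finset.sum_eq_zero fun j _ => ?_
  rw [map_mul, aeval_rename, Sum.elim_comp_inl, Pi.zero_def, aeval_zero', hv, map_zero, zero_mul]

end SymmetricAlgebra

section DegreeZeroStrand

variable {k d n}

theorem exists_rename_inr_eq_of_isWeightedHomogeneous_zero {g : B k d n}
    (hg : g.IsWeightedHomogeneous (wx d n) 0) : ∃ t : T k n, rename Sum.inr t = g := by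
  refine exists_rename_eq_of_vars_subset_range g Sum.inr Sum.inr_injective ?_
  rintro (i | j) hi
  · obtain ⟨s, hs, his⟩ := (mem_vars_iff_mem_support _).1 hi
    have hle := Finsupp.le_weight (wx d n) (s := Sum.inl i) one_ne_zero s
    rw [hg (mem_support_iff.1 hs), Nat.le_zero] at hle
    exact absurd hle (Finsupp.mem_support_iff.1 his)
  · exact ⟨j, rfl⟩

theorem SxDeg_zero_eq_range (I : Ideal (B k d n)) :
    SxDeg k d n I 0 = LinearMap.range (Algebra.linearMap (T k n) (B k d n ⧸ I)) := by
  rw [← Submodule.one_eq_range, Submodule.one_eq_span]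
  refine le_antisymm (Submodule.span_le.2 ?_) ((Submodule.span_singleton_le_iff_mem _ _).2 <|
    Submodule.subset_span ⟨1, isWeightedHomogeneous_one k _, rfl⟩)
  rintro _ ⟨g, hg, rfl⟩
  obtain ⟨t, rfl⟩ := exists_rename_inr_eq_of_isWeightedHomogeneous_zero hg
  exact Submodule.mem_span_singleton.2 ⟨t, (Algebra.algebraMap_eq_smul_one t).symm⟩

theorem algebraMap_quotient_injective {I : Ideal (B k d n)}
    (hI : I ≤ RingHom.ker (aeval (Sum.elim 0 X : Fin d ⊕ Fin n → T k n))) :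
    Function.Injective (algebraMap (T k n) (B k d n ⧸ I)) := by
  refine (injective_iff_map_eq_zero _).2 fun t ht => ?_
  have hmem : rename Sum.inr t ∈ I := Ideal.Quotient.eq_zero_iff_mem.1 ht
  have h := RingHom.mem_ker.1 (hI hmem)
  rwa [aeval_rename, Sum.elim_comp_inr, aeval_X_left_apply] at h

theorem nonempty_SxDeg_zero_equiv {I : Ideal (B k d n)}
    (hI : I ≤ RingHom.ker (aeval (Sum.elim 0 X : Fin d ⊕ Fin n → T k n))) :
    Nonempty (SxDeg k d n I 0 ≃ₗ[T k n] T k n) :=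
  ⟨(LinearEquiv.ofEq _ _ (SxDeg_zero_eq_range I)).trans
    (LinearEquiv.ofInjective _ (algebraMap_quotient_injective hI)).symm⟩

end DegreeZeroStrand

section Strands

variable {k d n}

theorem bidegree_relationForm {v : Fin n → MvPolynomial (Fin d) k} {m a b : ℕ}
    (hv : ∀ j, (v j).IsHomogeneous m) (h₀ : relationForm v ≠ 0)
    (h : (relationForm v).IsWeightedHomogeneous (bwt d n) (a, b)) : a = m ∧ b = 1 := by
  have h' := isWeightedHomogeneous_relationForm (w := bwt d n) (a := (1, 0)) (b := (0, 1))
    (fun _ => rfl) (fun _ => rfl) hv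
  simpa using h.inj_right h₀ h'

/-- The degrees of the columns of `[φ′ | φ″]`: all are linear except the last two, which are
quadratic. -/
def columnDegree (i : Fin d) : ℕ :=
  if (i : ℕ) < d - 2 then 1 else 2

theorem columnDegree_ne_zero (i : Fin d) : columnDegree i ≠ 0 := by
  unfold columnDegree
  split_ifs <;> decide

theorem sum_columnDegree (hd : 2 ≤ d) : ∑ i : Fin d, columnDegree i = d + 2 := by
  obtain ⟨m, rfl⟩ := Nat.exists_eq_add_of_le' hd
  simp [columnDegree, Fin.sum_univ_add]

theorem IsMinimalFamily.finrank_gradedPiece_of_columnDegree {F : Type*} [Field F] (hd : 2 ≤ d)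
    {f : Fin d → MvPolynomial (Fin d) F} (hf : IsMinimalFamily (idealOfVars (Fin d) F) f)
    (hdeg : ∀ i, (f i).IsHomogeneous (columnDegree i)) :
    Module.finrank F (gradedPiece (Ideal.span (Set.range f)) 1) = 2 ∧
      Module.finrank F (gradedPiece (Ideal.span (Set.range f)) 2) = 1 := by
  obtain ⟨m, rfl⟩ := Nat.exists_eq_add_of_le' hd
  have hf' := hf.comp_equiv (finSumFinEquiv (m := m) (n := 2))
  rw [← Sum.elim_comp_inl_inr (f ∘ finSumFinEquiv)] at hf'
  have h := hf'.finrank_gradedPiece_one_and_two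
    (fun i => by simpa [columnDegree] using hdeg (Fin.castAdd 2 i))
    (fun i => by simpa [columnDegree] using hdeg (Fin.natAdd m i)) (by simp) (by simp)
  rwa [Sum.elim_comp_inl_inr, finSumFinEquiv.surjective.range_comp] at h

theorem strand_ranks_general {d e : ℕ} (hd : 2 ≤ d)
    {E : Type*} [AddCommGroup E] [Module (MvPolynomial (Fin d) k) E]
    {φ : Matrix (Fin (d + e)) (Fin d) (MvPolynomial (Fin d) k)}
    (hinj : Function.Injective φ.mulVecLin)
    {π : (Fin (d + e) → MvPolynomial (Fin d) k) →ₗ[MvPolynomial (Fin d) k] E}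
    (hsurj : Function.Surjective π)
    (hker : LinearMap.ker π = LinearMap.range φ.mulVecLin)
    (hdeg : ∀ (i : Fin (d + e)) (j : Fin d),
      ((j : ℕ) < d - 2 → φ i j ∈ homogeneousSubmodule (Fin d) k 1) ∧
      (d - 2 ≤ (j : ℕ) → φ i j ∈ homogeneousSubmodule (Fin d) k 2))
    (hGd : SatisfiesG (MvPolynomial (Fin d) k) E e d)
    {ℓ : Fin d → B k d (d + e)}
    (hℓ : ∀ i, ℓ i = ∑ j, (rename Sum.inl (φ j i)) * X (Sum.inr j))
    {L : Ideal (B k d (d + e))} (hL : L = Ideal.span (Set.range ℓ)) :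
    (∀ α β : Fin d → ℕ,
      (∀ i, ℓ i ≠ 0 ∧ ℓ i ∈ weightedHomogeneousSubmodule k (bwt d (d + e)) (α i, β i)) →
      (∑ i, α i) = d + 2 ∧ (∑ i, β i) = d) ∧
    Nonempty ((SxDeg k d (d + e) L 0) ≃ₗ[T k (d + e)] T k (d + e)) ∧
    Module.rank (T k (d + e)) (SxDeg k d (d + e) L 1) = 2 ∧
    Module.rank (T k (d + e)) (SxDeg k d (d + e) L 2) = 1 := by
  have hφ (j i) : (φ j i).IsHomogeneous (columnDegree i) := by
    unfold columnDegree
    split_ifs with h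
    · exact (hdeg j i).1 h
    · exact (hdeg j i).2 (not_lt.1 h)
  obtain rfl : ℓ = fun i => relationForm (φ.col i) := funext hℓ
  have hbideg {i a b} := bidegree_relationForm (v := φ.col i) (a := a) (b := b) fun j => hφ j i
  have hfib := (hGd.isMinimalFamily hinj hsurj hker columnDegree_ne_zero hφ
    ).finrank_gradedPiece_of_columnDegree hd fun i =>
      isHomogeneous_algebraMap_relationForm fun j => hφ j i
  have hmap := congrArg (Ideal.map (algebraMap _ (GenericFibre k d (d + e)))) hL
  rw [Ideal.map_span, ← Set.range_comp] at hmap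
  refine ⟨fun α β h => ⟨?_, ?_⟩, nonempty_SxDeg_zero_equiv ?_, ?_, ?_⟩
  · rw [← sum_columnDegree hd]
    exact Finset.sum_congr rfl fun i _ => (hbideg (h i).1 (h i).2).1
  · simp [fun i => (hbideg (h i).1 (h i).2).2]
  · rw [hL, Ideal.span_le]
    rintro _ ⟨i, rfl⟩
    exact aeval_relationForm_of_constantCoeff_eq_zero fun j =>
      (hφ j i).coeff_eq_zero (by simpa using (columnDegree_ne_zero i).symm)
  · rw [rank_SxDeg, hmap]
    exact (Module.rank_eq_ofNat_iff_finrank_eq_ofNat 2).2 hfib.1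
  · rw [rank_SxDeg, hmap]
    exact Module.rank_eq_one_iff_finrank_eq_one.2 hfib.2

end Strands

theorem strand_ranks
    (d e : ℕ) (hd : 3 ≤ d)
    (E : Type) [AddCommGroup E] [Module (MvPolynomial (Fin d) k) E]
    [Module.Finite (MvPolynomial (Fin d) k) E]
    -- `E` is torsion-free
    (htf : Submodule.torsion (MvPolynomial (Fin d) k) E = ⊥)
    -- `0 → R^d →φ R^{d+e} →π E → 0` is a (minimal) free resolution, so `pd E = 1`,
    -- `rank E = e`
    (φ : Matrix (Fin (d + e)) (Fin d) (MvPolynomial (Fin d) k))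
    (hinj : Function.Injective φ.mulVecLin)
    (π : (Fin (d + e) → MvPolynomial (Fin d) k) →ₗ[MvPolynomial (Fin d) k] E)
    (hsurj : Function.Surjective π)
    (hker : LinearMap.ker π = LinearMap.range φ.mulVecLin)
    -- `φ = [φ′ | φ″]`: the first `d−2` columns are linear, the last two are quadrics
    (hdeg : ∀ (i : Fin (d + e)) (j : Fin d),
      ((j : ℕ) < d - 2 → φ i j ∈ homogeneousSubmodule (Fin d) k 1) ∧
      (d - 2 ≤ (j : ℕ) → φ i j ∈ homogeneousSubmodule (Fin d) k 2))
    -- `I_1(φ) = (x_1,…,x_d)`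
    (hI1 : Ideal.span {r : MvPolynomial (Fin d) k | ∃ i j, φ i j = r} =
      Ideal.span (Set.range X))
    -- `E` is minimally generated by `μ(E) = d+e` elements
    (hμ : ∀ s : Finset E, Submodule.span (MvPolynomial (Fin d) k) (s : Set E) = ⊤ →
      d + e ≤ s.card)
    -- `E` satisfies `G_d`
    (hGd : ∀ (p : Ideal (MvPolynomial (Fin d) k)) (_ : p.IsPrime) (c : ℕ),
      ringKrullDim (Localization.AtPrime p) = (c : WithBot ℕ∞) → 1 ≤ c → c ≤ d - 1 →
      ∃ s : Finset (LocalizedModule p.primeCompl E), s.card ≤ c + e - 1 ∧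
        Submodule.span (Localization.AtPrime p)
          (s : Set (LocalizedModule p.primeCompl E)) = ⊤)
    -- the defining ideal `L` of the symmetric algebra: `[ℓ_1 … ℓ_d] = [y_1 … y_{d+e}]·φ`
    (ℓ : Fin d → B k d (d + e))
    (hℓ : ∀ i, ℓ i = ∑ j, (rename Sum.inl (φ j i)) * X (Sum.inr j))
    (L : Ideal (B k d (d + e))) (hL : L = Ideal.span (Set.range ℓ)) :
    -- `δ = 2` and `τ = d` for the bidegrees of the regular sequence `ℓ_1,…,ℓ_d`
    (∀ α β : Fin d → ℕ,
      (∀ i, ℓ i ≠ 0 ∧ ℓ i ∈ weightedHomogeneousSubmodule k (bwt d (d + e)) (α i, β i)) →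
      (∑ i, α i) = d + 2 ∧ (∑ i, β i) = d) ∧
    -- `S(E)_0` is free of rank one over `T`
    Nonempty ((SxDeg k d (d + e) L 0) ≃ₗ[T k (d + e)] T k (d + e)) ∧
    -- `rank_T S(E)_1 = 2`
    Module.rank (T k (d + e)) (SxDeg k d (d + e) L 1) = 2 ∧
    -- `rank_T S(E)_2 = 1`
    Module.rank (T k (d + e)) (SxDeg k d (d + e) L 2) = 1 :=
  strand_ranks_general (by lia) hinj hsurj hker hdeg hGd hℓ hL

end Stmt7
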